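/- Explicit projection onto the feasible set Ω. For any D ∈ ℝ^{M×M}, let {(λ_m, v_m)}_{m=1}^M be the eigenvalues and an orthonormal eigenbasis of the symmetric matrix (I_M − P_U)((D + Dᵀ)/2)(I_M − P_U). Then the matrix A° = P_U + Σ_{m=1}^M clamp_{1−ε}(λ_m) v_m v_mᵀ belongs to Ω and is the unique minimizer of the Frobenius norm ‖A − D‖_F over all A ∈ Ω; equivalently, the Frobenius-norm projection of D onto Ω is obtained by first projecting D onto Ω₁ = {A : AU = U, A = Aᵀ} and then projecting the result onto Ω₂ = {A : ‖A − P_U‖ ≤ 1 − ε}. -/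

import Mathlib

/-!
Write `P = U Uᴴ` and `S = (I - P) ((D + Dᴴ) / 2) (I - P)`, and let `C` be obtained from `S` by
clamping its eigenvalues to `[-r, r]`, where `r = 1 - ε`. In the real inner product `Re Tr(Xᴴ Y)`,
the obtuse-angle criterion makes `P + C` the projection of `D` onto `Ω` as soon as
`⟨A - (P + C), (P + C) - D⟩ ≥ 0` for every feasible `A`. The matrix `E = A - (P + C)` is Hermitian
and vanishes on the columns of `U`, hence is orthogonal to `P` and to `D - S`, and the inner
product collapses to `⟨(A - P) - C, C - S⟩`. In the eigenbasis of `S` this is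
`∑ᵢ (bᵢ - clamp λᵢ) (clamp λᵢ - λᵢ)` with `bᵢ = ⟨vᵢ, (A - P) vᵢ⟩ ∈ [-r, r]`, which is nonnegative
term by term because clamping is the projection of the real line onto `[-r, r]`.

That `C` still vanishes on the columns of `U` follows from `S U = 0`: as `clamp 0 = 0`, the matrix
`C` is a left multiple of `S`.
-/

open Matrix

/-- The spectral (operator `ℓ²`-) norm of a real square matrix. -/
noncomputable def specNormR {M : ℕ} (X : Matrix (Fin M) (Fin M) ℝ) : ℝ :=
  ‖Matrix.toEuclideanCLM (𝕜 := ℝ) X‖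

/-- The Frobenius norm `‖X‖_F = √Tr(XᵀX)` of a real square matrix. -/
noncomputable def frobNorm {M : ℕ} (X : Matrix (Fin M) (Fin M) ℝ) : ℝ :=
  Real.sqrt ((Xᵀ * X).trace)

/-- `clamp_r(λ) = min (max λ (-r)) r`. -/
def clamp (r lam : ℝ) : ℝ := min (max lam (-r)) r

section Clamp

variable {r : ℝ}

lemma abs_clamp_le (hr : 0 ≤ r) (x : ℝ) : |clamp r x| ≤ r :=
  abs_le.2 ⟨le_min (le_max_right _ _) (by linarith), min_le_right _ _⟩

lemma clamp_zero (hr : 0 ≤ r) : clamp r 0 = 0 := by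
  simp [clamp, hr]

/-- Variational inequality characterizing `clamp r x` as the projection of `x` onto `[-r, r]`. -/
lemma clamp_sub_mul_sub_clamp_nonneg {b : ℝ} (hb : |b| ≤ r) (x : ℝ) :
    0 ≤ (clamp r x - x) * (b - clamp r x) := by
  obtain ⟨hb₁, hb₂⟩ := abs_le.1 hb
  unfold clamp
  rcases le_total x (-r) with hx | hx
  · rw [max_eq_right hx, min_eq_left (by linarith)]
    exact mul_nonneg (by linarith) (by linarith)
  · rw [max_eq_left hx]
    rcases le_total x r with hx' | hx'
    · simp [min_eq_left hx']
    · rw [min_eq_right hx']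
      exact mul_nonneg_of_nonpos_of_nonpos (by linarith) (by linarith)

end Clamp

section InnerProduct

variable {𝕜 E ι : Type*} [RCLike 𝕜] [SeminormedAddCommGroup E] [InnerProductSpace 𝕜 E]

lemma abs_re_inner_apply_self_le_opNorm (T : E →L[𝕜] E) {x : E} (hx : ‖x‖ = 1) :
    |RCLike.re (inner 𝕜 x (T x))| ≤ ‖T‖ :=
  calc |RCLike.re (inner 𝕜 x (T x))| ≤ ‖inner 𝕜 x (T x)‖ := RCLike.abs_re_le_norm _
    _ ≤ ‖x‖ * ‖T x‖ := norm_inner_le_norm _ _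
    _ ≤ ‖T‖ := by simpa [hx] using T.le_opNorm x

lemma norm_sum_mul_inner_smul_le {v : ι → E} (hv : Orthonormal 𝕜 v) (s : Finset ι)
    {c : ι → 𝕜} {r : ℝ} (hr : 0 ≤ r) (hc : ∀ i ∈ s, ‖c i‖ ≤ r) (x : E) :
    ‖∑ i ∈ s, (c i * inner 𝕜 (v i) x) • v i‖ ≤ r * ‖x‖ := by
  refine le_of_sq_le_sq ?_ (by positivity)
  calc ‖∑ i ∈ s, (c i * inner 𝕜 (v i) x) • v i‖ ^ 2
      = ∑ i ∈ s, ‖c i‖ ^ 2 * ‖inner 𝕜 (v i) x‖ ^ 2 := by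
        rw [@norm_sq_eq_re_inner 𝕜, hv.inner_sum, map_sum]
        refine Finset.sum_congr rfl fun i _ => ?_
        rw [RCLike.conj_mul, ← RCLike.ofReal_pow, RCLike.ofReal_re, norm_mul, mul_pow]
    _ ≤ ∑ i ∈ s, r ^ 2 * ‖inner 𝕜 (v i) x‖ ^ 2 := by
        gcongr with i hi
        exact hc i hi
    _ ≤ (r * ‖x‖) ^ 2 := by
        rw [← Finset.mul_sum, mul_pow]
        gcongr
        exact hv.sum_inner_products_le x

lemma orthonormal_toLp_iff {n : Type*} [Fintype n] [DecidableEq ι] {v : ι → n → 𝕜} :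
    Orthonormal 𝕜 (fun i => WithLp.toLp 2 (v i)) ↔
      ∀ i j, star (v i) ⬝ᵥ v j = if i = j then (1 : 𝕜) else 0 := by
  simp only [orthonormal_iff_ite, EuclideanSpace.inner_toLp_toLp, dotProduct_comm (star _)]

end InnerProduct

section SpectralSum

variable {𝕜 n ι : Type*} [RCLike 𝕜] [Fintype ι]

/-- The matrix `∑ᵢ cᵢ vᵢ vᵢᴴ`; for an orthonormal family `v` it is the Hermitian matrix with
eigenpairs `(cᵢ, vᵢ)` that vanishes on the orthogonal complement of `v`. -/
noncomputable def spectralSum (c : ι → ℝ) (v : ι → EuclideanSpace 𝕜 n) : Matrix n n 𝕜 :=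
  ∑ i, c i • vecMulVec (v i) (star (v i).ofLp)

lemma isHermitian_spectralSum (c : ι → ℝ) (v : ι → EuclideanSpace 𝕜 n) :
    (spectralSum c v).IsHermitian := by
  simp [IsHermitian, spectralSum, conjTranspose_sum, conjTranspose_vecMulVec]

lemma spectralSum_sub (c d : ι → ℝ) (v : ι → EuclideanSpace 𝕜 n) :
    spectralSum (c - d) v = spectralSum c v - spectralSum d v := by
  simp [spectralSum, sub_smul, Finset.sum_sub_distrib]

variable [Fintype n] {v : ι → EuclideanSpace 𝕜 n}

lemma spectralSum_mul_spectralSum (hv : Orthonormal 𝕜 v) (c d : ι → ℝ) :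
    spectralSum c v * spectralSum d v = spectralSum (c * d) v := by
  classical
  simp only [spectralSum, Finset.sum_mul_sum, smul_mul_smul_comm, vecMulVec_mul_vecMulVec,
    orthonormal_toLp_iff.1 hv, vecMulVec_smul]
  simp

lemma trace_spectralSum (hv : Orthonormal 𝕜 v) (c : ι → ℝ) :
    (spectralSum c v).trace = ∑ i, (c i : 𝕜) := by
  classical
  simp [spectralSum, trace_sum, trace_vecMulVec, dotProduct_comm _ (star _),
    orthonormal_toLp_iff.1 hv, RCLike.real_smul_eq_coe_mul]

lemma spectralSum_mul_eq_zero {p : Type*} (hv : Orthonormal 𝕜 v) {c d : ι → ℝ}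
    (hcd : ∀ i, c i = 0 → d i = 0) {B : Matrix n p 𝕜} (hB : spectralSum c v * B = 0) :
    spectralSum d v * B = 0 := by
  have hd : d = d / c * c := by
    ext i
    exact (div_mul_cancel_of_imp (hcd i)).symm
  rw [hd, ← spectralSum_mul_spectralSum hv, Matrix.mul_assoc, hB, Matrix.mul_zero]

variable [DecidableEq n]

lemma toEuclideanCLM_spectralSum_apply (c : ι → ℝ) (v : ι → EuclideanSpace 𝕜 n)
    (x : EuclideanSpace 𝕜 n) :
    toEuclideanCLM (n := n) (𝕜 := 𝕜) (spectralSum c v) x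
      = ∑ i, ((c i : 𝕜) * inner 𝕜 (v i) x) • v i := by
  ext j
  simp [spectralSum, Matrix.smul_mulVec, vecMulVec_mulVec, EuclideanSpace.inner_eq_star_dotProduct,
    dotProduct_comm, RCLike.real_smul_eq_coe_mul, mul_assoc]

lemma norm_toEuclideanCLM_spectralSum_le (hv : Orthonormal 𝕜 v) {c : ι → ℝ} {r : ℝ}
    (hr : 0 ≤ r) (hc : ∀ i, |c i| ≤ r) :
    ‖toEuclideanCLM (n := n) (𝕜 := 𝕜) (spectralSum c v)‖ ≤ r := by
  refine ContinuousLinearMap.opNorm_le_bound _ hr fun x => ?_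
  rw [toEuclideanCLM_spectralSum_apply]
  exact norm_sum_mul_inner_smul_le hv _ hr (by simpa using hc) x

lemma trace_mul_spectralSum (B : Matrix n n 𝕜) (c : ι → ℝ) (v : ι → EuclideanSpace 𝕜 n) :
    (B * spectralSum c v).trace
      = ∑ i, (c i : 𝕜) * inner 𝕜 (v i) (toEuclideanCLM (n := n) (𝕜 := 𝕜) B (v i)) := by
  simp [spectralSum, Finset.mul_sum, trace_sum, mul_vecMulVec, trace_vecMulVec,
    EuclideanSpace.inner_eq_star_dotProduct, RCLike.real_smul_eq_coe_mul]

/-- Clamping the eigenvalues projects onto the spectral-norm ball of radius `r`. -/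
lemma re_trace_sub_clamp_mul_clamp_sub_nonneg (hv : Orthonormal 𝕜 v) {r : ℝ} {B : Matrix n n 𝕜}
    (hB : ‖toEuclideanCLM (n := n) (𝕜 := 𝕜) B‖ ≤ r) (lam : ι → ℝ) :
    0 ≤ RCLike.re ((B - spectralSum (clamp r ∘ lam) v) *
      (spectralSum (clamp r ∘ lam) v - spectralSum lam v)).trace := by
  rw [← spectralSum_sub, sub_mul, spectralSum_mul_spectralSum hv, trace_sub, trace_spectralSum hv,
    trace_mul_spectralSum, ← Finset.sum_sub_distrib, map_sum]
  refine Finset.sum_nonneg fun i _ => ?_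
  have hquad := (abs_re_inner_apply_self_le_opNorm
    (toEuclideanCLM (n := n) (𝕜 := 𝕜) B) (hv.1 i)).trans hB
  rw [map_sub, RCLike.re_ofReal_mul, RCLike.ofReal_re]
  calc 0 ≤ _ := clamp_sub_mul_sub_clamp_nonneg hquad (lam i)
    _ = _ := by simp only [Pi.mul_apply, Pi.sub_apply, Function.comp_apply]; ring

end SpectralSum

section Frobenius

variable {𝕜 m n : Type*} [RCLike 𝕜] [Fintype m] [Fintype n]

lemma re_trace_conjTranspose_mul_comm (X Y : Matrix m n 𝕜) :
    RCLike.re (Xᴴ * Y).trace = RCLike.re (Yᴴ * X).trace := by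
  rw [← RCLike.conj_re, starRingEnd_apply, ← trace_conjTranspose, conjTranspose_mul,
    conjTranspose_conjTranspose]

lemma re_trace_mul_hermitianPart {E : Matrix n n 𝕜} (hE : E.IsHermitian) (D : Matrix n n 𝕜) :
    RCLike.re (E * ((2 : ℝ)⁻¹ • (D + Dᴴ))).trace = RCLike.re (E * D).trace := by
  have hstar : RCLike.re (E * Dᴴ).trace = RCLike.re (E * D).trace := by
    rw [trace_mul_comm, re_trace_conjTranspose_mul_comm, hE.eq]
  rw [Matrix.mul_smul, Matrix.mul_add, trace_smul, trace_add, RCLike.smul_re, map_add, hstar]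
  ring

open scoped Matrix.Norms.Frobenius

lemma frobenius_norm_sq_eq_re_trace (X : Matrix m n 𝕜) :
    ‖X‖ ^ 2 = RCLike.re (Xᴴ * X).trace := by
  rw [frobenius_norm_def, ← Real.sqrt_eq_rpow, Real.sq_sqrt (by positivity), Finset.sum_comm]
  simp [trace, Matrix.mul_apply, RCLike.conj_mul]

lemma frobenius_norm_add_sq (X Y : Matrix m n 𝕜) :
    ‖X + Y‖ ^ 2 = ‖X‖ ^ 2 + 2 * RCLike.re (Xᴴ * Y).trace + ‖Y‖ ^ 2 := by
  simp only [frobenius_norm_sq_eq_re_trace, conjTranspose_add, Matrix.add_mul, Matrix.mul_add,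
    trace_add, map_add, re_trace_conjTranspose_mul_comm Y X]
  ring

lemma frobenius_norm_sub_sq_add_sq_le {A B D : Matrix m n 𝕜}
    (h : 0 ≤ RCLike.re ((A - B)ᴴ * (B - D)).trace) :
    ‖B - D‖ ^ 2 + ‖A - B‖ ^ 2 ≤ ‖A - D‖ ^ 2 := by
  rw [← sub_add_sub_cancel A B D, frobenius_norm_add_sq]
  linarith

end Frobenius

section FeasibleSet

variable {𝕜 n p ι : Type*} [RCLike 𝕜] [Fintype n] [DecidableEq n] [Fintype p] [Fintype ι]

/-- The set `Ω` of the Hermitian matrices that fix the columns of `U` and lie within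
spectral-norm distance `r` of `P_U = U Uᴴ`; the paper's radius is `r = 1 - ε`. -/
def feasibleSet (U : Matrix n p 𝕜) (r : ℝ) : Set (Matrix n n 𝕜) :=
  {A | A * U = U ∧ A.IsHermitian ∧ ‖toEuclideanCLM (n := n) (𝕜 := 𝕜) (A - U * Uᴴ)‖ ≤ r}

/-- The compression `(I - P_U) ((D + Dᴴ) / 2) (I - P_U)` of the Hermitian part of `D`, where
`P_U = U Uᴴ`. -/
noncomputable def compressedHermitianPart (U : Matrix n p 𝕜) (D : Matrix n n 𝕜) : Matrix n n 𝕜 :=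
  (1 - U * Uᴴ) * ((2 : ℝ)⁻¹ • (D + Dᴴ)) * (1 - U * Uᴴ)

variable {U : Matrix n p 𝕜} {r : ℝ} {lam : ι → ℝ} {v : ι → EuclideanSpace 𝕜 n}

lemma compressedHermitianPart_mul_self (hU : U * Uᴴ * U = U) (D : Matrix n n 𝕜) :
    compressedHermitianPart U D * U = 0 := by
  have hcompl : (1 - U * Uᴴ) * U = 0 := by rw [Matrix.sub_mul, Matrix.one_mul, hU, sub_self]
  rw [compressedHermitianPart, Matrix.mul_assoc, hcompl, Matrix.mul_zero]

/-- As `E` runs over the direction space of `Ω₁ = {A : A U = U, A = Aᴴ}`, this says that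
`U Uᴴ + compressedHermitianPart U D` is the Frobenius projection of `D` onto `Ω₁`. -/
lemma re_trace_mul_compressedHermitianPart {E : Matrix n n 𝕜} (hE : E.IsHermitian)
    (hEU : E * U = 0) (D : Matrix n n 𝕜) :
    RCLike.re (E * compressedHermitianPart U D).trace = RCLike.re (E * D).trace := by
  have hright : E * (1 - U * Uᴴ) = E := by
    rw [Matrix.mul_sub, Matrix.mul_one, ← Matrix.mul_assoc, hEU, Matrix.zero_mul, sub_zero]
  have hleft : (1 - U * Uᴴ) * E = E := by
    simpa [conjTranspose_mul, hE.eq] using congrArg conjTranspose hright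
  rw [compressedHermitianPart, ← Matrix.mul_assoc, ← Matrix.mul_assoc, hright, trace_mul_comm,
    ← Matrix.mul_assoc, hleft, re_trace_mul_hermitianPart hE]

lemma add_spectralSum_clamp_mem_feasibleSet (hU : U * Uᴴ * U = U) (hr : 0 ≤ r)
    (hv : Orthonormal 𝕜 v) (hlam : spectralSum lam v * U = 0) :
    U * Uᴴ + spectralSum (clamp r ∘ lam) v ∈ feasibleSet U r := by
  have hclamp : spectralSum (clamp r ∘ lam) v * U = 0 :=
    spectralSum_mul_eq_zero hv (fun i hi => by simp [hi, clamp_zero hr]) hlam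
  refine ⟨by rw [Matrix.add_mul, hU, hclamp, add_zero],
    (isHermitian_mul_conjTranspose_self U).add (isHermitian_spectralSum _ _), ?_⟩
  rw [add_sub_cancel_left]
  exact norm_toEuclideanCLM_spectralSum_le hv hr fun i => abs_clamp_le hr (lam i)

lemma re_trace_conjTranspose_sub_mul_sub_nonneg_of_mem_feasibleSet
    (hU : U * Uᴴ * U = U) (hv : Orthonormal 𝕜 v) {D : Matrix n n 𝕜}
    (hD : compressedHermitianPart U D = spectralSum lam v)
    {A : Matrix n n 𝕜} (hA : A ∈ feasibleSet U r) :
    0 ≤ RCLike.re ((A - (U * Uᴴ + spectralSum (clamp r ∘ lam) v))ᴴ *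
      (U * Uᴴ + spectralSum (clamp r ∘ lam) v - D)).trace := by
  obtain ⟨hAU, hAH, hAr⟩ := hA
  set C := spectralSum (clamp r ∘ lam) v
  obtain ⟨hBU, hBH, -⟩ := add_spectralSum_clamp_mem_feasibleSet hU
    ((norm_nonneg _).trans hAr) hv (hD ▸ compressedHermitianPart_mul_self hU D)
  have hEH : (A - (U * Uᴴ + C)).IsHermitian := hAH.sub hBH
  have hEU : (A - (U * Uᴴ + C)) * U = 0 := by rw [Matrix.sub_mul, hAU, hBU, sub_self]
  calc 0 ≤ RCLike.re ((A - U * Uᴴ - C) * (C - spectralSum lam v)).trace :=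
        re_trace_sub_clamp_mul_clamp_sub_nonneg hv hAr lam
    _ = RCLike.re ((A - (U * Uᴴ + C)) * C).trace - RCLike.re ((A - (U * Uᴴ + C)) * D).trace := by
        rw [sub_sub, Matrix.mul_sub, trace_sub, map_sub, ← hD,
          re_trace_mul_compressedHermitianPart hEH hEU]
    _ = RCLike.re ((A - (U * Uᴴ + C))ᴴ * (U * Uᴴ + C - D)).trace := by
        rw [hEH.eq, Matrix.mul_sub, Matrix.mul_add, ← Matrix.mul_assoc _ U, hEU, Matrix.zero_mul,
          zero_add, trace_sub, map_sub]

end FeasibleSet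

open scoped Matrix.Norms.Frobenius in
theorem projection_onto_feasible_set_Omega_general {𝕜 n p ι : Type*} [RCLike 𝕜] [Fintype n]
    [DecidableEq n] [Fintype p] [Fintype ι] {U : Matrix n p 𝕜} (hU : U * Uᴴ * U = U) {r : ℝ}
    (hr : 0 ≤ r) {D : Matrix n n 𝕜} {lam : ι → ℝ} {v : ι → EuclideanSpace 𝕜 n}
    (hv : Orthonormal 𝕜 v) (hD : compressedHermitianPart U D = spectralSum lam v) :
    U * Uᴴ + spectralSum (clamp r ∘ lam) v ∈ feasibleSet U r ∧
      ∀ A ∈ feasibleSet U r,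
        ‖U * Uᴴ + spectralSum (clamp r ∘ lam) v - D‖ ≤ ‖A - D‖ ∧
        (‖A - D‖ = ‖U * Uᴴ + spectralSum (clamp r ∘ lam) v - D‖ →
          A = U * Uᴴ + spectralSum (clamp r ∘ lam) v) := by
  refine ⟨add_spectralSum_clamp_mem_feasibleSet hU hr hv
    (hD ▸ compressedHermitianPart_mul_self hU D), fun A hA => ?_⟩
  have hpyth := frobenius_norm_sub_sq_add_sq_le
    (re_trace_conjTranspose_sub_mul_sub_nonneg_of_mem_feasibleSet hU hv hD hA)
  refine ⟨le_of_sq_le_sq (by linarith [sq_nonneg ‖A - (U * Uᴴ + spectralSum (clamp r ∘ lam) v)‖])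
    (norm_nonneg _), fun heq => ?_⟩
  rw [heq, add_le_iff_nonpos_right] at hpyth
  exact sub_eq_zero.1 (norm_eq_zero.1 (pow_eq_zero_iff two_ne_zero |>.1
    (hpyth.antisymm (sq_nonneg _))))

section Real

variable {M P : ℕ}

open scoped Matrix.Norms.Frobenius in
lemma frobNorm_eq_frobenius_norm (X : Matrix (Fin M) (Fin M) ℝ) : frobNorm X = ‖X‖ := by
  rw [frobNorm, ← Real.sqrt_sq (norm_nonneg X), frobenius_norm_sq_eq_re_trace,
    conjTranspose_eq_transpose_of_trivial, RCLike.re_to_real]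

lemma mem_feasibleSet_iff_real {U : Matrix (Fin M) (Fin P) ℝ} {r : ℝ}
    {A : Matrix (Fin M) (Fin M) ℝ} :
    A ∈ feasibleSet U r ↔ A * U = U ∧ A = Aᵀ ∧ specNormR (A - U * Uᵀ) ≤ r := by
  rw [feasibleSet, Set.mem_ofPred_eq, IsHermitian, conjTranspose_eq_transpose_of_trivial,
    conjTranspose_eq_transpose_of_trivial, eq_comm (a := Aᵀ), specNormR]

lemma spectralSum_toLp_real {n ι : Type*} [Fintype ι] (c : ι → ℝ) (v : ι → n → ℝ) :
    spectralSum c (fun i => WithLp.toLp 2 (v i)) = ∑ i, c i • vecMulVec (v i) (v i) := by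
  simp only [spectralSum, star_trivial]

end Real

/-- **Explicit projection onto the feasible set
`Ω = {A : AU = U, A = Aᵀ, ‖A - P_U‖ ≤ 1 - ε}`.**
`U ∈ ℝ^{M×P}` has orthonormal columns, `P_U = UUᵀ`, `ε ∈ (0,1]`.  For any `D ∈ ℝ^{M×M}`,
let `{(λₘ, vₘ)}` be an orthonormal eigendecomposition of the symmetric matrix
`(I - P_U)((D + Dᵀ)/2)(I - P_U)`.  Then `A° = P_U + Σₘ clamp_{1-ε}(λₘ) vₘ vₘᵀ` belongs to
`Ω` and is the unique minimizer of the Frobenius norm `‖A - D‖_F` over all `A ∈ Ω`. -/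
theorem projection_onto_feasible_set_Omega
    {M P : ℕ} (U : Matrix (Fin M) (Fin P) ℝ) (hU : Uᵀ * U = 1)
    (ε : ℝ) (hε0 : 0 < ε) (hε1 : ε ≤ 1)
    (D : Matrix (Fin M) (Fin M) ℝ)
    (lam : Fin M → ℝ) (v : Fin M → Fin M → ℝ)
    (hortho : ∀ a b : Fin M, v a ⬝ᵥ v b = if a = b then (1 : ℝ) else 0)
    (hdecomp : (1 - U * Uᵀ) * ((2 : ℝ)⁻¹ • (D + Dᵀ)) * (1 - U * Uᵀ) =
      ∑ m : Fin M, lam m • vecMulVec (v m) (v m)) :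
    ((U * Uᵀ + ∑ m : Fin M, clamp (1 - ε) (lam m) • vecMulVec (v m) (v m)) * U = U ∧
     U * Uᵀ + ∑ m : Fin M, clamp (1 - ε) (lam m) • vecMulVec (v m) (v m) =
       (U * Uᵀ + ∑ m : Fin M, clamp (1 - ε) (lam m) • vecMulVec (v m) (v m))ᵀ ∧
     specNormR ((U * Uᵀ + ∑ m : Fin M, clamp (1 - ε) (lam m) • vecMulVec (v m) (v m))
        - U * Uᵀ) ≤ 1 - ε) ∧
    ∀ A : Matrix (Fin M) (Fin M) ℝ,
      A * U = U → A = Aᵀ → specNormR (A - U * Uᵀ) ≤ 1 - ε →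
      frobNorm ((U * Uᵀ + ∑ m : Fin M, clamp (1 - ε) (lam m) • vecMulVec (v m) (v m)) - D)
          ≤ frobNorm (A - D) ∧
      (frobNorm (A - D) =
          frobNorm ((U * Uᵀ + ∑ m : Fin M, clamp (1 - ε) (lam m) • vecMulVec (v m) (v m))
            - D) →
        A = U * Uᵀ + ∑ m : Fin M, clamp (1 - ε) (lam m) • vecMulVec (v m) (v m)) := by
  have hv : Orthonormal ℝ fun m => WithLp.toLp 2 (v m) := orthonormal_toLp_iff.2 hortho
  have hUU : U * Uᴴ * U = U := by
    rw [conjTranspose_eq_transpose_of_trivial, Matrix.mul_assoc, hU, Matrix.mul_one]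
  have hD : compressedHermitianPart U D = spectralSum lam fun m => WithLp.toLp 2 (v m) := by
    rw [spectralSum_toLp_real, ← hdecomp]
    rfl
  simpa only [mem_feasibleSet_iff_real, spectralSum_toLp_real, frobNorm_eq_frobenius_norm,
    conjTranspose_eq_transpose_of_trivial, Function.comp_apply, and_imp] using
    projection_onto_feasible_set_Omega_general hUU (sub_nonneg.2 hε1) hv hD
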